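/- arXiv:2302.14151 — 3 statements merged into one kernel-verified Lean document; each statement's English description precedes it below -/
import Mathlib

section
/- Let M be a totally unimodular real matrix with finitely many rows and columns, let l be a fixed row index, and let s ∈ {1,−1}. Then every extreme point of the polyhedron P = {x : x ≥ 0 and M·x = s·e_l}, where e_l is the l-th standard unit vector, has all of its coordinates in {0,1}. -/
/-!
An extreme point `x` of `{x | 0 ≤ x, M x = b}` cannot be moved in both directions along a kernel
vector of `M` supported on the support of `x`, so the columns of `M` on that support are linearly
independent. Some square submatrix `B` on these columns is therefore nonsingular, and Cramer's rule
writes each nonzero coordinate of `x` as a quotient of two minors of `[M | b]`. If `[M | b]` is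
totally unimodular, both minors lie in `{0, 1, -1}`; for `b = ± e_l` it is, because appending a
signed unit column preserves total unimodularity.
-/

open Function Matrix Set

lemma submatrix_mulVec_comp_of_support_subset_range {α R C R' C' : Type*}
    [NonUnitalNonAssocSemiring α] [Fintype C] [Fintype C'] (M : Matrix R C α) (f : R' → R)
    {g : C' → C} (hg : Injective g) {x : C → α} (hx : support x ⊆ range g) :
    M.submatrix f g *ᵥ (x ∘ g) = (M *ᵥ x) ∘ f := by
  ext r
  refine Fintype.sum_of_injective g hg _ _ (fun c hc ↦ ?_) fun _ ↦ rfl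
  rw [notMem_support.mp fun h ↦ hc (hx h), mul_zero]

section ExtremePoints

variable {K : Type*} [Field K] [LinearOrder K] [IsStrictOrderedRing K]

lemma eq_zero_of_mem_extremePoints_of_add_mem_of_sub_mem {E : Type*} [AddCommGroup E] [Module K E]
    {P : Set E} {x v : E} (hx : x ∈ P.extremePoints K) (hadd : x + v ∈ P) (hsub : x - v ∈ P) :
    v = 0 := by
  have hmem : x ∈ openSegment K (x + v) (x - v) :=
    ⟨1 / 2, 1 / 2, by positivity, by positivity, by norm_num, by module⟩
  simpa using (mem_extremePoints_iff_left.mp hx).2 _ hadd _ hsub hmem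

lemma exists_pos_forall_mul_abs_le {ι : Type*} [Finite ι] {x d : ι → K} (hx : ∀ i, 0 ≤ x i)
    (hd : support d ⊆ support x) : ∃ ε > 0, ∀ i, ε * |d i| ≤ x i := by
  have hcoord (i : ι) : ∃ ε : Ioi (0 : K), (ε : K) * |d i| ≤ x i := by
    by_cases hdi : d i = 0
    · exact ⟨⟨1, one_pos⟩, by simpa [hdi] using hx i⟩
    · have hxi : 0 < x i := (hx i).lt_of_ne' (hd hdi)
      have hdi' : 0 < |d i| := abs_pos.mpr hdi
      exact ⟨⟨x i / |d i|, div_pos hxi hdi'⟩, (div_mul_cancel₀ _ hdi'.ne').le⟩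
  choose ε hε using hcoord
  obtain ⟨δ, hδ⟩ := Finite.bddBelow_range ε
  have hδε (i : ι) : (δ : K) ≤ ε i := hδ (mem_range_self i)
  exact ⟨δ, δ.2, fun i ↦ (mul_le_mul_of_nonneg_right (hδε i) (abs_nonneg _)).trans (hε i)⟩

variable {R C : Type*} [Fintype C] {M : Matrix R C K} {b : R → K} {x : C → K}

lemma eq_zero_of_mulVec_eq_zero_of_support_subset
    (hx : x ∈ {y : C → K | (∀ c, 0 ≤ y c) ∧ M *ᵥ y = b}.extremePoints K) {d : C → K}
    (hd : support d ⊆ support x) (hMd : M *ᵥ d = 0) : d = 0 := by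
  obtain ⟨hx_nonneg, hMx⟩ := hx.1
  obtain ⟨ε, hε, hεd⟩ := exists_pos_forall_mul_abs_le hx_nonneg hd
  have habs (c : C) : |ε * d c| ≤ x c := by
    rw [abs_mul, abs_of_pos hε]
    exact hεd c
  have hadd (c : C) : 0 ≤ (x + ε • d) c := neg_le_iff_add_nonneg'.mp (neg_le_of_abs_le (habs c))
  have hsub (c : C) : 0 ≤ (x - ε • d) c := sub_nonneg.mpr (le_of_abs_le (habs c))
  have hεd_zero : ε • d = 0 := eq_zero_of_mem_extremePoints_of_add_mem_of_sub_mem hx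
    ⟨hadd, by simp [mulVec_add, mulVec_smul, hMd, hMx]⟩
    ⟨hsub, by simp [mulVec_sub, mulVec_smul, hMd, hMx]⟩
  exact (smul_eq_zero.mp hεd_zero).resolve_left hε.ne'

lemma linearIndepOn_col_support_of_mem_extremePoints
    (hx : x ∈ {y : C → K | (∀ c, 0 ≤ y c) ∧ M *ᵥ y = b}.extremePoints K) :
    LinearIndepOn K M.col (support x) := by
  classical
  let incl : support x → C := (↑)
  have hincl : Injective incl := Subtype.val_injective
  change LinearIndependent K (M.submatrix id incl).col
  refine mulVec_injective_iff.mp <|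
    (injective_iff_map_eq_zero (M.submatrix id incl).mulVecLin).mpr fun v hv ↦ ?_
  let d : C → K := extend incl v (0 : C → K)
  have hdv : d ∘ incl = v := extend_comp hincl v _
  have hd : support d ⊆ range incl := fun c hc ↦ by
    by_contra h
    exact hc (extend_apply' v _ c h)
  have hMd : M *ᵥ d = 0 := by
    rw [← hv, mulVecLin_apply, ← hdv]
    exact (submatrix_mulVec_comp_of_support_subset_range M id hincl hd).symm
  have hd_zero : d = 0 :=
    eq_zero_of_mulVec_eq_zero_of_support_subset hx (by simpa [incl] using hd) hMd
  rw [← hdv, hd_zero, Pi.zero_comp]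

end ExtremePoints

lemma exists_det_submatrix_ne_zero_of_linearIndependent_col {K R S : Type*} [Field K] [Fintype S]
    [DecidableEq S] {A : Matrix R S K} (hA : LinearIndependent K A.col) :
    ∃ f : S → R, (A.submatrix f id).det ≠ 0 := by
  have hspan : Submodule.span K (range A.row) = ⊤ := span_flip_eq_top_iff_linearIndependent.mpr hA
  obtain ⟨κ, f, -, hf_span, hf⟩ := exists_linearIndependent' K A.row
  let rowBasis : Module.Basis κ K (S → K) := .mk hf (hf_span.trans hspan).ge
  let e : S ≃ κ := (Pi.basisFun K S).indexEquiv rowBasis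
  have hrows : LinearIndependent K (A.submatrix (f ∘ e) id).row := hf.comp e e.injective
  exact ⟨f ∘ e,
    ((isUnit_iff_isUnit_det _).mp (linearIndependent_rows_iff_isUnit.mp hrows)).ne_zero⟩

section TotallyUnimodular

variable {α : Type*} [CommRing α]

lemma det_smul_eq_cramer_mulVec {n : Type*} [Fintype n] [DecidableEq n] (B : Matrix n n α)
    (y : n → α) : B.det • y = B.cramer (B *ᵥ y) := by
  rw [cramer_eq_adjugate_mulVec, mulVec_mulVec, adjugate_mul, smul_mulVec, one_mulVec]

lemma mem_range_signType_cast_of_isTotallyUnimodular {n : Type*} [Fintype n] [DecidableEq n]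
    {B : Matrix n n α} {y : n → α}
    (hTU : (fromCols B (replicateCol Unit (B *ᵥ y))).IsTotallyUnimodular) (hB : B.det ≠ 0)
    (i : n) : y i ∈ range (SignType.cast : SignType → α) := by
  have hminor := (isTotallyUnimodular_iff_fintype _).mp hTU n id
  obtain ⟨σ, hσ⟩ : B.det ∈ range SignType.cast := hminor Sum.inl
  obtain ⟨τ, hτ⟩ : (B.updateCol i (B *ᵥ y)).det ∈ range SignType.cast := by
    convert hminor (update Sum.inl i (Sum.inr ())) using 2
    ext r j
    obtain rfl | hj := eq_or_ne j i <;> simp [*]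
  have hcramer : (σ : α) * y i = τ := by
    rw [hσ, hτ, ← cramer_apply, ← det_smul_eq_cramer_mulVec, Pi.smul_apply, smul_eq_mul]
  rw [← hσ] at hB
  cases σ with
  | zero => simp at hB
  | pos => exact ⟨τ, by simpa using hcramer.symm⟩
  | neg => exact ⟨-τ, by simp [← hcramer]⟩

lemma isTotallyUnimodular_fromCols_unitlike {m n n' : Type*} [DecidableEq m] {A : Matrix m n α}
    {B : Matrix m n' α} (hA : A.IsTotallyUnimodular)
    (hB : Nonempty m → ∀ j, ∃ i, ∃ σ : SignType, B.col j = Pi.single i (σ : α)) :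
    (fromCols A B).IsTotallyUnimodular := by
  rw [← transpose_isTotallyUnimodular_iff, transpose_fromCols]
  exact hA.transpose.fromRows_unitlike hB

end TotallyUnimodular

theorem extremePoint_of_TU_zero_one_general {K R C : Type*} [Field K] [LinearOrder K]
    [IsStrictOrderedRing K] [Fintype C] (M : Matrix R C K) (b : R → K)
    (hTU : (fromCols M (replicateCol Unit b)).IsTotallyUnimodular) (x : C → K)
    (hx : x ∈ {y : C → K | (∀ c, 0 ≤ y c) ∧ M *ᵥ y = b}.extremePoints K) :
    ∀ c, x c = 0 ∨ x c = 1 := by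
  classical
  intro c
  refine or_iff_not_imp_left.mpr fun hc ↦ ?_
  obtain ⟨hx_nonneg, rfl⟩ := hx.1
  let incl : support x → C := (↑)
  obtain ⟨f, hf⟩ := exists_det_submatrix_ne_zero_of_linearIndependent_col
    (A := M.submatrix id incl) (linearIndepOn_col_support_of_mem_extremePoints hx)
  let B : Matrix (support x) (support x) K := M.submatrix f incl
  have hBx : B *ᵥ (x ∘ incl) = (M *ᵥ x) ∘ f :=
    submatrix_mulVec_comp_of_support_subset_range M f Subtype.val_injective (by simp)
  have hBTU : (fromCols B (replicateCol Unit (B *ᵥ (x ∘ incl)))).IsTotallyUnimodular := by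
    convert hTU.submatrix f (Sum.map incl id) using 1
    ext i (j | j) <;> simp [B, hBx]
  obtain ⟨σ, hσ : (σ : K) = x c⟩ :=
    mem_range_signType_cast_of_isTotallyUnimodular hBTU hf ⟨c, hc⟩
  have hpos : (0 : K) < σ := hσ ▸ (hx_nonneg c).lt_of_ne' hc
  cases σ with
  | zero => simp at hpos
  | neg => simp [(neg_one_lt_zero (R := K)).not_gt] at hpos
  | pos => simpa using hσ.symm

/-- Let `M` be a totally unimodular real matrix with finitely many rows and columns,
`l` a fixed row index and `s ∈ {1, -1}`.  Then every extreme point of the polyhedron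
`P = {x : x ≥ 0, M·x = s·e_l}` has all of its coordinates in `{0, 1}`. -/
theorem extremePoint_of_TU_zero_one
    {R C : Type} [Fintype R] [Fintype C] [DecidableEq R]
    (M : Matrix R C ℝ) (hM : M.IsTotallyUnimodular)
    (l : R) (s : ℝ) (hs : s = 1 ∨ s = -1)
    (x : C → ℝ)
    (hx : x ∈ Set.extremePoints ℝ
      {x' : C → ℝ | (∀ c, 0 ≤ x' c) ∧
        M.mulVec x' = fun r => s * (if r = l then 1 else 0)}) :
    ∀ c, x c = 0 ∨ x c = 1 := by
  obtain ⟨σ, rfl⟩ : ∃ σ : SignType, (σ : ℝ) = s := by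
    rcases hs with rfl | rfl
    exacts [⟨1, by simp⟩, ⟨-1, by simp⟩]
  refine extremePoint_of_TU_zero_one_general M _ ?_ x hx
  exact isTotallyUnimodular_fromCols_unitlike hM fun _ _ ↦ ⟨l, σ, by ext; simp [Pi.single_apply]⟩
end

section
/- Let M be a real matrix with rows indexed by a finite type R and columns by a finite type C, let b : R → ℝ, and let x̄ be an extreme point of the polyhedron {x : x ≥ 0, M·x = b}. Then there is no nonempty set J ⊆ C such that x̄_j > 0 for all j ∈ J and, for every row r at which some column of J has a nonzero entry, both b_r = 0 and M(r, c) = 0 for every column c ∉ J with x̄_c > 0. (In other words, at an extreme point the positively weighted columns cannot contain a nonempty isolated block whose rows are all homogeneous.) -/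
/-!
Let `d` be the truncation of `x` to the block `J`. A row meeting `J` has right-hand side zero and
vanishes wherever `x` is positive outside `J`, and a row not meeting `J` kills `d` term by term, so
`M *ᵥ d = 0`. Since `0 ≤ d ≤ x`, both `x - d` and `x + d` are feasible, and extremality of their
midpoint `x` forces `d = 0`.
-/

section ExtremePoints

variable {𝕜 E F : Type*} [Ring 𝕜] [LinearOrder 𝕜] [IsStrictOrderedRing 𝕜] [Invertible (2 : 𝕜)]
  [AddCommGroup E] [Module 𝕜 E] [AddGroup F]

theorem eq_zero_of_mem_extremePoints_of_sub_mem_of_add_mem {S : Set E} {x d : E}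
    (hx : x ∈ S.extremePoints 𝕜) (hsub : x - d ∈ S) (hadd : x + d ∈ S) : d = 0 :=
  sub_eq_self.mp (hx.2 hsub hadd (mem_openSegment_sub_add x d))

theorem eq_zero_of_mem_extremePoints_of_map_eq_zero [PartialOrder E] [IsOrderedAddMonoid E]
    {A : E →+ F} {b : F} {x d : E} (hx : x ∈ {y | 0 ≤ y ∧ A y = b}.extremePoints 𝕜)
    (hd : A d = 0) (hneg : -x ≤ d) (hle : d ≤ x) : d = 0 := by
  have hAx : A x = b := hx.1.2
  refine eq_zero_of_mem_extremePoints_of_sub_mem_of_add_mem hx ⟨sub_nonneg.mpr hle, ?_⟩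
    ⟨neg_le_iff_add_nonneg'.mp hneg, ?_⟩
  · rw [map_sub, hd, sub_zero, hAx]
  · rw [map_add, hd, add_zero, hAx]

end ExtremePoints

section Matrix

open scoped Matrix

variable {𝕜 R C : Type*} [Fintype C]

theorem mulVec_indicator_apply_eq_zero [NonUnitalNonAssocSemiring 𝕜] {M : Matrix R C 𝕜} {J : Set C}
    {r : R} (hJ : ∀ c ∈ J, M r c = 0) (x : C → 𝕜) : (M *ᵥ J.indicator x) r = 0 := by
  refine Finset.sum_eq_zero fun c _ ↦ ?_
  by_cases hc : c ∈ J
  · simp only [hJ c hc, zero_mul]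
  · rw [Set.indicator_of_notMem hc, mul_zero]

theorem mulVec_indicator_apply_eq_mulVec_apply [NonUnitalNonAssocSemiring 𝕜] {M : Matrix R C 𝕜}
    {J : Set C} {r : R} {x : C → 𝕜} (hJ : ∀ c ∉ J, M r c * x c = 0) :
    (M *ᵥ J.indicator x) r = (M *ᵥ x) r := by
  refine Finset.sum_congr rfl fun c _ ↦ ?_
  by_cases hc : c ∈ J
  · rw [Set.indicator_of_mem hc]
  · rw [Set.indicator_of_notMem hc, mul_zero, hJ c hc]

theorem mulVec_indicator_eq_zero_of_isolated [NonUnitalNonAssocSemiring 𝕜] [PartialOrder 𝕜]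
    {M : Matrix R C 𝕜} {x : C → 𝕜} (hx : 0 ≤ x) {J : Set C}
    (hJ : ∀ r, (∃ j ∈ J, M r j ≠ 0) → (M *ᵥ x) r = 0 ∧ ∀ c ∉ J, 0 < x c → M r c = 0) :
    M *ᵥ J.indicator x = 0 := by
  funext r
  by_cases hr : ∃ j ∈ J, M r j ≠ 0
  · obtain ⟨homogeneous, isolated⟩ := hJ r hr
    have vanish_outside (c : C) (hc : c ∉ J) : M r c * x c = 0 := by
      rcases (hx c).eq_or_lt with hxc | hxc
      · rw [← hxc, Pi.zero_apply, mul_zero]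
      · rw [isolated c hc hxc, zero_mul]
    rw [mulVec_indicator_apply_eq_mulVec_apply vanish_outside, homogeneous, Pi.zero_apply]
  · push Not at hr
    exact mulVec_indicator_apply_eq_zero hr x

theorem extremePoint_no_isolated_homogeneous_block_general [Ring 𝕜] [LinearOrder 𝕜]
    [IsStrictOrderedRing 𝕜] [Invertible (2 : 𝕜)] {M : Matrix R C 𝕜} {b : R → 𝕜} {x : C → 𝕜}
    (hx : x ∈ {y : C → 𝕜 | (∀ c, 0 ≤ y c) ∧ M *ᵥ y = b}.extremePoints 𝕜) {J : Set C}
    (hJ : ∀ r, (∃ j ∈ J, M r j ≠ 0) → b r = 0 ∧ ∀ c ∉ J, 0 < x c → M r c = 0) :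
    ∀ j ∈ J, x j = 0 := by
  obtain ⟨nonneg, rfl⟩ : 0 ≤ x ∧ M *ᵥ x = b := hx.1
  have kernel : M *ᵥ J.indicator x = 0 := mulVec_indicator_eq_zero_of_isolated nonneg hJ
  have indicator_nonneg : 0 ≤ J.indicator x := Set.indicator_nonneg fun c _ ↦ nonneg c
  have indicator_le : J.indicator x ≤ x := Set.indicator_le_self' fun c _ ↦ nonneg c
  have indicator_eq_zero : J.indicator x = 0 :=
    eq_zero_of_mem_extremePoints_of_map_eq_zero (A := .mk' (M *ᵥ ·) M.mulVec_add) hx kernel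
      ((neg_nonpos.mpr nonneg).trans indicator_nonneg) indicator_le
  intro j hj
  rw [← Set.indicator_of_mem hj x, indicator_eq_zero, Pi.zero_apply]

end Matrix

/-- Let `M` be a real matrix with rows `R` and columns `C` (both finite), `b : R → ℝ`, and
`x̄` an extreme point of `{x : x ≥ 0, M·x = b}`.  Then there is no nonempty set `J ⊆ C` of
positively weighted columns such that, for every row `r` at which some column of `J` has a
nonzero entry, both `b r = 0` and `M r c = 0` for every positively weighted column `c ∉ J`:
at an extreme point the positive columns cannot contain a nonempty isolated block whose
rows are all homogeneous. -/
theorem extremePoint_no_isolated_homogeneous_block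
    {R C : Type} [Fintype R] [Fintype C]
    (M : Matrix R C ℝ) (b : R → ℝ)
    (x : C → ℝ)
    (hx : x ∈ Set.extremePoints ℝ
      {x' : C → ℝ | (∀ c, 0 ≤ x' c) ∧ M.mulVec x' = b}) :
    ¬∃ J : Set C, J.Nonempty ∧ (∀ j ∈ J, 0 < x j) ∧
      ∀ r : R, (∃ j ∈ J, M r j ≠ 0) →
        b r = 0 ∧ ∀ c ∉ J, 0 < x c → M r c = 0 := by
  rintro ⟨J, ⟨j, hj⟩, hpos, hJ⟩
  exact (hpos j hj).ne' (extremePoint_no_isolated_homogeneous_block_general hx hJ j hj)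
end

section
/- Every extreme point (x̄, ȳ, z̄) of the bilinear set S has binary y-components: ȳ_j ∈ {0,1} for every j = 1, …, m; consequently, since Σ_j ȳ_j ≤ 1, the vector ȳ is either the zero vector or a standard unit vector of ℝᵐ. -/
/-!
With `x` fixed, `y ↦ (x, y, z)` is affine because `z` is linear in `y`. So a segment through `ȳ`
inside `Δ_m` lifts to a segment through `(x̄, ȳ, z̄)` inside `S`, and extremality of `(x̄, ȳ, z̄)`
passes to `ȳ`. Since `Δ_m` is the convex hull of `0` and the standard unit vectors, `ȳ` is one of
these.
-/

open Set

section FiberwiseLinearGraph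

variable {𝕜 E F G : Type*} [Semiring 𝕜] [AddCommMonoid F] [Module 𝕜 F] [AddCommMonoid G]
  [Module 𝕜 G]

/-- The graph of `(x, y) ↦ B x y` over `X × Y`. It models a bilinear set such as `S`; only
linearity in `y` is built in, so `x ↦ B x` is an arbitrary function. -/
def fiberwiseLinearGraph (X : Set E) (Y : Set F) (B : E → F →ₗ[𝕜] G) : Set (E × F × G) :=
  {p | p.1 ∈ X ∧ p.2.1 ∈ Y ∧ p.2.2 = B p.1 p.2.1}

theorem mk_apply_mem_openSegment [PartialOrder 𝕜] [AddCommMonoid E] [Module 𝕜 E] (x : E)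
    (L : F →ₗ[𝕜] G) {y y₁ y₂ : F} (hy : y ∈ openSegment 𝕜 y₁ y₂) :
    (x, y, L y) ∈ openSegment 𝕜 (x, y₁, L y₁) (x, y₂, L y₂) := by
  obtain ⟨a, b, ha, hb, hab, rfl⟩ := hy
  exact ⟨a, b, ha, hb, hab, by simp [Convex.combo_self hab]⟩

theorem mem_extremePoints_of_mem_extremePoints_fiberwiseLinearGraph [PartialOrder 𝕜]
    [AddCommMonoid E] [Module 𝕜 E] {X : Set E} {Y : Set F} {B : E → F →ₗ[𝕜] G} {p : E × F × G}
    (hp : p ∈ (fiberwiseLinearGraph X Y B).extremePoints 𝕜) : p.2.1 ∈ Y.extremePoints 𝕜 := by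
  obtain ⟨x, y, z⟩ := p
  obtain ⟨⟨hx, hy, rfl : z = B x y⟩, hext⟩ := hp
  refine ⟨hy, fun y₁ hy₁ y₂ hy₂ hseg ↦ ?_⟩
  have lift_mem : ∀ y' ∈ Y, (x, y', B x y') ∈ fiberwiseLinearGraph X Y B :=
    fun y' hy' ↦ ⟨hx, hy', rfl⟩
  have lift_eq : (x, y₁, B x y₁) = (x, y, B x y) :=
    hext (lift_mem y₁ hy₁) (lift_mem y₂ hy₂) (mk_apply_mem_openSegment x (B x) hseg)
  exact congrArg (·.2.1) lift_eq

end FiberwiseLinearGraph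

theorem sum_smul_mem_of_convex_of_zero_mem {R E ι : Type*} [Field R] [LinearOrder R]
    [IsStrictOrderedRing R] [AddCommGroup E] [Module R E] {s : Set E} (hs : Convex R s)
    (h0 : (0 : E) ∈ s) {t : Finset ι} {w : ι → R} {v : ι → E} (hw : ∀ i ∈ t, 0 ≤ w i)
    (hsum : ∑ i ∈ t, w i ≤ 1) (hv : ∀ i ∈ t, v i ∈ s) : ∑ i ∈ t, w i • v i ∈ s := by
  -- The slack `1 - ∑ i ∈ t, w i` is the weight given to the point `0`, indexed by `none`.
  have hmem := hs.sum_mem (t := t.insertNone) (w := fun o ↦ o.elim (1 - ∑ i ∈ t, w i) w)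
    (z := fun o ↦ o.elim 0 v) (Finset.forall_mem_insertNone.2 ⟨sub_nonneg.2 hsum, hw⟩)
    (by simp) (Finset.forall_mem_insertNone.2 ⟨h0, hv⟩)
  simpa using hmem

section CornerSimplex

variable (𝕜 ι : Type*) [Fintype ι]

/-- The full-dimensional simplex `Δ_m` of nonnegative vectors with coordinate sum at most `1`;
the facet of sum exactly `1` is `stdSimplex 𝕜 ι`. -/
def cornerSimplex [Semiring 𝕜] [PartialOrder 𝕜] : Set (ι → 𝕜) :=
  {y | (∀ j, 0 ≤ y j) ∧ ∑ j, y j ≤ 1}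

theorem convex_cornerSimplex [Semiring 𝕜] [PartialOrder 𝕜] [IsOrderedRing 𝕜] :
    Convex 𝕜 (cornerSimplex 𝕜 ι) :=
  (convex_Ici 0).inter <| convex_halfSpace_le (f := fun y : ι → 𝕜 ↦ ∑ j, y j)
    ⟨fun _ _ ↦ Finset.sum_add_distrib, fun _ _ ↦ (Finset.mul_sum ..).symm⟩ 1

theorem insert_zero_range_single_subset_cornerSimplex [Semiring 𝕜] [PartialOrder 𝕜]
    [IsOrderedRing 𝕜] [DecidableEq ι] :
    insert 0 (range fun j ↦ Pi.single j 1) ⊆ cornerSimplex 𝕜 ι := by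
  rintro _ (rfl | ⟨j, rfl⟩)
  · simp [cornerSimplex]
  · exact ⟨Pi.single_nonneg.2 zero_le_one, by simp⟩

variable [Field 𝕜] [LinearOrder 𝕜] [IsStrictOrderedRing 𝕜] [DecidableEq ι]

theorem cornerSimplex_subset_convexHull :
    cornerSimplex 𝕜 ι ⊆ convexHull 𝕜 (insert 0 (range fun j ↦ Pi.single j 1)) := by
  rintro y ⟨hnonneg, hsum⟩
  rw [pi_eq_sum_univ' y]
  exact sum_smul_mem_of_convex_of_zero_mem (convex_convexHull 𝕜 _)
    (subset_convexHull 𝕜 _ (mem_insert 0 _)) (fun j _ ↦ hnonneg j) hsum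
    fun j _ ↦ subset_convexHull 𝕜 _ (mem_insert_of_mem 0 (mem_range_self j))

theorem convexHull_insert_zero_range_single_eq_cornerSimplex :
    convexHull 𝕜 (insert 0 (range fun j ↦ Pi.single j 1)) = cornerSimplex 𝕜 ι :=
  (convexHull_min (insert_zero_range_single_subset_cornerSimplex 𝕜 ι)
    (convex_cornerSimplex 𝕜 ι)).antisymm (cornerSimplex_subset_convexHull 𝕜 ι)

theorem extremePoints_cornerSimplex_subset :
    (cornerSimplex 𝕜 ι).extremePoints 𝕜 ⊆ insert 0 (range fun j ↦ Pi.single j 1) := by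
  rw [← convexHull_insert_zero_range_single_eq_cornerSimplex]
  exact extremePoints_convexHull_subset

end CornerSimplex

theorem extremePoint_bilinear_y_binary_general {𝕜 E G ι : Type*} [Field 𝕜] [LinearOrder 𝕜]
    [IsStrictOrderedRing 𝕜] [AddCommMonoid E] [Module 𝕜 E] [AddCommMonoid G] [Module 𝕜 G]
    [Fintype ι] [DecidableEq ι] {X : Set E} {B : E → (ι → 𝕜) →ₗ[𝕜] G} {p : E × (ι → 𝕜) × G}
    (hp : p ∈ (fiberwiseLinearGraph X (cornerSimplex 𝕜 ι) B).extremePoints 𝕜) :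
    (∀ j, p.2.1 j = 0 ∨ p.2.1 j = 1) ∧
    (p.2.1 = 0 ∨ ∃ j, p.2.1 = fun j' ↦ if j' = j then 1 else 0) := by
  obtain hzero | ⟨j, hsingle⟩ := extremePoints_cornerSimplex_subset 𝕜 ι
    (mem_extremePoints_of_mem_extremePoints_fiberwiseLinearGraph hp)
  · exact ⟨fun j ↦ .inl (congrFun hzero j), .inl hzero⟩
  · have hunit : p.2.1 = fun j' ↦ if j' = j then 1 else 0 :=
      hsingle.symm.trans (funext fun j' ↦ Pi.single_apply j 1 j')
    exact ⟨fun j' ↦ hunit ▸ (ite_eq_or_eq (j' = j) 1 0).symm, .inr ⟨j, hunit⟩⟩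

/-- The linear map `y ↦ (y_{jc k} x_{ic k})_k` giving the products `z` at a fixed `x`. -/
def selectedProducts {R ι κ K : Type*} [Semiring R] (jc : K → κ) (ic : K → ι) (x : ι → R) :
    (κ → R) →ₗ[R] K → R :=
  LinearMap.pi fun k ↦ (LinearMap.proj (jc k)).smulRight (x (ic k))

/-- Every extreme point `(x̄, ȳ, z̄)` of the bilinear set
`S = {(x, y, z) ∈ Ξ × Δ_m × ℝ^K : z_k = y_{jc k}·x_{ic k}}`, where
`Ξ = {x : E·x ≥ f, 0 ≤ x ≤ u}` and `Δ_m = {y : y ≥ 0, Σ_j y_j ≤ 1}`, has binary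
`y`-components: `ȳ_j ∈ {0, 1}` for every `j`; consequently, since `Σ_j ȳ_j ≤ 1`, the
vector `ȳ` is either the zero vector or a standard unit vector of `ℝᵐ`. -/
theorem extremePoint_bilinear_y_binary
    {n m τ : ℕ} {K : Type} [Fintype K]
    (E : Fin τ → Fin n → ℝ) (f : Fin τ → ℝ) (u : Fin n → ℝ)
    (jc : K → Fin m) (ic : K → Fin n)
    (S : Set ((Fin n → ℝ) × (Fin m → ℝ) × (K → ℝ)))
    (hS : S = {p | (∀ ti, f ti ≤ ∑ i, E ti i * p.1 i) ∧
      (∀ i, 0 ≤ p.1 i ∧ p.1 i ≤ u i) ∧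
      (∀ j, 0 ≤ p.2.1 j) ∧ (∑ j, p.2.1 j) ≤ 1 ∧
      (∀ k, p.2.2 k = p.2.1 (jc k) * p.1 (ic k))})
    (p : (Fin n → ℝ) × (Fin m → ℝ) × (K → ℝ))
    (hp : p ∈ Set.extremePoints ℝ S) :
    (∀ j, p.2.1 j = 0 ∨ p.2.1 j = 1) ∧
    (p.2.1 = 0 ∨ ∃ j : Fin m, p.2.1 = fun j' => if j' = j then 1 else 0) := by
  have hgraph : S = fiberwiseLinearGraph
      {x | (∀ ti, f ti ≤ ∑ i, E ti i * x i) ∧ ∀ i, 0 ≤ x i ∧ x i ≤ u i}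
      (cornerSimplex ℝ (Fin m)) (selectedProducts jc ic) := by
    ext q
    simp [hS, fiberwiseLinearGraph, cornerSimplex, selectedProducts, funext_iff, and_assoc]
  exact extremePoint_bilinear_y_binary_general (hgraph ▸ hp)
end
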